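/- arXiv:1604.04809 — 2 statements merged into one kernel-verified Lean document; each statement's English description precedes it below -/
import Mathlib

section
/- There is a constant c (independent of the game) such that every coordination game without bonuses on an unweighted partition-cycle on n nodes with top part of size k admits, from every joint strategy, a finite improvement path of length at most c·n·(n−k) (hence ending in a Nash equilibrium). -/
/-!
Let the players move in the cyclic order `0, 1, …, n - 1`, each to a best response; call this a
sweep. Every edge except the one from the last player to player `0` goes forward, so after a sweep
only player `0` can be unsatisfied, and a sweep in which the last player keeps its colour ends in a
Nash equilibrium.

A player that has to move breaks ties in favour of the colour with the largest support along the
cross-edges. After each unfinished sweep there is then a final segment of bottom players sharing one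
colour `y` that has maximal cross-support at each of them. During the next sweep the top players can
only switch to `y`, as in a row of dominoes, so `y` keeps maximal cross-support on the segment. A
segment player can now leave `y` only by copying its cyclic predecessor. Hence if the last player
leaves `y`, the whole segment and the player just before it have adopted one new colour, and that
player must be a bottom player that has moved as well. The segment has grown by one, which can
happen at most `n - k` times.
-/

open scoped Classical

namespace CG

/-- Payoff of node `i` in a coordination game on a weighted directed graph
with adjacency `adj` (an edge `j → i` is `adj j i`), edge weights `w`,
bonuses `β`, under the joint strategy `s`. -/
noncomputable def payoff {V M : Type} [Fintype V] (adj : V → V → Prop)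
    (w : V → V → ℝ) (β : V → M → ℕ) (s : V → M) (i : V) : ℝ :=
  (∑ j ∈ Finset.univ.filter (fun j => adj j i ∧ s j = s i), w j i) + (β i (s i) : ℝ)

/-- A joint strategy assigns to every node a colour from its colour set. -/
def Valid {V M : Type} (C : V → Finset M) (s : V → M) : Prop :=
  ∀ i, s i ∈ C i

/-- `s'` is a profitable deviation of the (non-empty) coalition
`K = {i | s i ≠ s' i}` from `s`. -/
def ProfDev {V M : Type} [Fintype V] (adj : V → V → Prop) (w : V → V → ℝ)
    (β : V → M → ℕ) (C : V → Finset M) (s s' : V → M) : Prop :=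
  Valid C s' ∧ s ≠ s' ∧
    ∀ i, s i ≠ s' i → payoff adj w β s i < payoff adj w β s' i

/-- A profitable deviation of a single player. -/
def UniDev {V M : Type} [Fintype V] (adj : V → V → Prop) (w : V → V → ℝ)
    (β : V → M → ℕ) (C : V → Finset M) (s s' : V → M) : Prop :=
  ProfDev adj w β C s s' ∧ ∃ i, ∀ j, j ≠ i → s j = s' j

/-- A Nash equilibrium: no single player has a profitable deviation. -/
def IsNash {V M : Type} [Fintype V] (adj : V → V → Prop) (w : V → V → ℝ)
    (β : V → M → ℕ) (C : V → Finset M) (s : V → M) : Prop :=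
  Valid C s ∧ ∀ s', ¬ UniDev adj w β C s s'

/-- A strong equilibrium: no coalition has a profitable deviation. -/
def IsStrong {V M : Type} [Fintype V] (adj : V → V → Prop) (w : V → V → ℝ)
    (β : V → M → ℕ) (C : V → Finset M) (s : V → M) : Prop :=
  Valid C s ∧ ∀ s', ¬ ProfDev adj w β C s s'

/-- There is a finite improvement path of length `L` starting at `s`
(each step a profitable single-player deviation) ending in a Nash equilibrium. -/
def ImpPath {V M : Type} [Fintype V] (adj : V → V → Prop) (w : V → V → ℝ)
    (β : V → M → ℕ) (C : V → Finset M) (s : V → M) (L : ℕ) : Prop :=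
  ∃ σ : ℕ → V → M, σ 0 = s ∧
    (∀ t, t < L → UniDev adj w β C (σ t) (σ (t + 1))) ∧
    IsNash adj w β C (σ L)

/-- There is a finite c-improvement path of length `L` starting at `s`
(each step a profitable coalition deviation) ending in a strong equilibrium. -/
def CImpPath {V M : Type} [Fintype V] (adj : V → V → Prop) (w : V → V → ℝ)
    (β : V → M → ℕ) (C : V → Finset M) (s : V → M) (L : ℕ) : Prop :=
  ∃ σ : ℕ → V → M, σ 0 = s ∧
    (∀ t, t < L → ProfDev adj w β C (σ t) (σ (t + 1))) ∧
    IsStrong adj w β C (σ L)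

/-- Adjacency of the simple cycle `1 → 2 → ⋯ → n → 1` on `Fin n`. -/
def cycAdj (n : ℕ) : Fin n → Fin n → Prop :=
  fun i j => (i.val + 1) % n = j.val

/-- Adjacency of a partition-cycle on `Fin n`: the cyclic edges
`i → i+1 (mod n)` together with the cross-edges `Ep`. -/
def pcAdj (n : ℕ) (Ep : Finset (Fin n × Fin n)) : Fin n → Fin n → Prop :=
  fun i j => (i.val + 1) % n = j.val ∨ (i, j) ∈ Ep

/-- A partition-cycle on `Fin n` with top part `V_T = {i | i.val < k}`
(of size `k`, `1 ≤ k < n`) and bottom part `V_B = {i | k ≤ i.val}`: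
the cross-edges `Ep` go from `V_T` to `V_B` and are not cyclic edges. -/
def IsPartitionCycle (n k : ℕ) (Ep : Finset (Fin n × Fin n)) : Prop :=
  1 ≤ k ∧ k < n ∧
  (∀ e ∈ Ep, e.1.val < k ∧ k ≤ e.2.val) ∧
  (∀ e ∈ Ep, (e.1.val + 1) % n ≠ e.2.val)

section Game

variable {V M : Type} {adj : V → V → Prop} {C : V → Finset M} {s s' : V → M} {i : V} {c : M}

/-- The number of in-neighbours of `i` that play colour `c` in `s`: the payoff that colour `c`
would give player `i` in the unweighted game without bonuses. -/
noncomputable def support [Fintype V] (adj : V → V → Prop) (s : V → M) (i : V) (c : M) : ℕ :=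
  (Finset.univ.filter fun j => adj j i ∧ s j = c).card

/-- Some improvement path from `s` reaches a Nash equilibrium in at most `L` steps. -/
def StabilizesWithin [Fintype V] (adj : V → V → Prop) (w : V → V → ℝ) (β : V → M → ℕ)
    (C : V → Finset M) (s : V → M) (L : ℕ) : Prop :=
  ∃ L' ≤ L, ImpPath adj w β C s L'

lemma Valid.update [DecidableEq V] (hs : Valid C s) (hc : c ∈ C i) :
    Valid C (Function.update s i c) := by
  intro j
  rcases eq_or_ne j i with rfl | hj
  · rwa [Function.update_self]
  · rw [Function.update_of_ne hj]
    exact hs j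

variable [Fintype V]

lemma support_mono (h : ∀ j, adj j i → s j = c → s' j = c) :
    support adj s i c ≤ support adj s' i c :=
  Finset.card_le_card <| Finset.monotone_filter_right _ fun j _ hj => ⟨hj.1, h j hj.1 hj.2⟩

lemma support_congr (h : ∀ j, adj j i → s j = s' j) : support adj s i = support adj s' i :=
  funext fun _ => le_antisymm (support_mono fun j hj hc => (h j hj).symm.trans hc)
    (support_mono fun j hj hc => (h j hj).trans hc)

lemma support_or {adj' : V → V → Prop} (h : ∀ j, adj j i → ¬ adj' j i) :
    support (fun j i => adj j i ∨ adj' j i) s i c = support adj s i c + support adj' s i c := by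
  simp only [support, or_and_right, Finset.filter_or]
  exact Finset.card_union_of_disjoint <|
    Finset.disjoint_filter.2 fun j _ hj hj' => h j hj.1 hj'.1

lemma support_eq_ite {p : V} (h : ∀ j, adj j i ↔ j = p) :
    support adj s i c = if s p = c then 1 else 0 := by
  simp only [support, h]
  split_ifs with hp
  · refine Finset.card_eq_one.2 ⟨p, Finset.eq_singleton_iff_unique_mem.2 ⟨by simp [hp], ?_⟩⟩
    exact fun j hj => (Finset.mem_filter.1 hj).2.1
  · refine Finset.card_eq_zero.2 (Finset.filter_eq_empty_iff.2 ?_)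
    rintro _ - ⟨rfl, hc⟩
    exact hp hc

lemma support_update_self [DecidableEq V] (hi : ¬ adj i i) :
    support adj (Function.update s i c) i = support adj s i :=
  support_congr fun j hj => Function.update_of_ne (by rintro rfl; exact hi hj) _ _

lemma payoff_one_zero : payoff adj (fun _ _ => 1) (fun _ _ => 0) s i = support adj s i (s i) := by
  simp [payoff, support]

lemma uniDev_update [DecidableEq V] (hi : ¬ adj i i) (hs : Valid C s) (hc : c ∈ C i)
    (hlt : support adj s i (s i) < support adj s i c) :
    UniDev adj (fun _ _ => 1) (fun _ _ => 0) C s (Function.update s i c) := by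
  refine ⟨⟨hs.update hc, fun heq => ?_, fun j hj => ?_⟩,
    i, fun j hj => (Function.update_of_ne hj _ _).symm⟩
  · have hsi : s i = c := by simpa using congrFun heq i
    exact hlt.ne (by rw [hsi])
  · obtain rfl : j = i := by
      by_contra hji
      exact hj (Function.update_of_ne hji _ _).symm
    rw [payoff_one_zero, payoff_one_zero, support_update_self hi, Function.update_self]
    exact_mod_cast hlt

lemma isNash_of_support_le (hadj : ∀ i, ¬ adj i i) (hs : Valid C s)
    (hle : ∀ i, ∀ c ∈ C i, support adj s i c ≤ support adj s i (s i)) :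
    IsNash adj (fun _ _ => 1) (fun _ _ => 0) C s := by
  refine ⟨hs, ?_⟩
  rintro s' ⟨⟨hs', hne, himp⟩, i, hoff⟩
  have hi : s i ≠ s' i := fun hi => hne <| funext fun j => by
    rcases eq_or_ne j i with rfl | hj
    exacts [hi, hoff j hj]
  have hsupp : support adj s i = support adj s' i :=
    support_congr fun j hj => hoff j fun hji => hadj i (hji ▸ hj)
  have hlt := himp i hi
  rw [payoff_one_zero, payoff_one_zero, ← hsupp, Nat.cast_lt] at hlt
  exact (hle i _ (hs' i)).not_gt hlt

variable {w : V → V → ℝ} {β : V → M → ℕ} {L L' : ℕ}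

lemma IsNash.stabilizesWithin (h : IsNash adj w β C s) : StabilizesWithin adj w β C s L :=
  ⟨0, L.zero_le, fun _ => s, rfl, fun _ ht => absurd ht (Nat.not_lt_zero _), h⟩

lemma StabilizesWithin.mono (h : StabilizesWithin adj w β C s L) (hL : L ≤ L') :
    StabilizesWithin adj w β C s L' :=
  let ⟨l, hl, hpath⟩ := h
  ⟨l, hl.trans hL, hpath⟩

lemma StabilizesWithin.of_uniDev (h : StabilizesWithin adj w β C s' L)
    (hdev : UniDev adj w β C s s') : StabilizesWithin adj w β C s (L + 1) := by
  obtain ⟨l, hl, σ, rfl, hσ, hnash⟩ := h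
  refine ⟨l + 1, Nat.succ_le_succ hl, fun t => Nat.casesOn t s σ, rfl, fun t ht => ?_, hnash⟩
  cases t with
  | zero => exact hdev
  | succ t => exact hσ t (Nat.lt_of_succ_lt_succ ht)

end Game

section PartitionCycle

variable {m k : ℕ} {Ep : Finset (Fin (m + 1) × Fin (m + 1))} {i j p : Fin (m + 1)}

lemma cycAdj_castSucc_succ (i : Fin m) : cycAdj (m + 1) i.castSucc i.succ :=
  Nat.mod_eq_of_lt (Nat.succ_lt_succ i.isLt)

lemma cycAdj_last_zero : cycAdj (m + 1) (Fin.last m) 0 :=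
  Nat.mod_self _

lemma exists_cycAdj (i : Fin (m + 1)) : ∃ p, cycAdj (m + 1) p i := by
  cases i using Fin.cases with
  | zero => exact ⟨_, cycAdj_last_zero⟩
  | succ i => exact ⟨_, cycAdj_castSucc_succ i⟩

lemma cycAdj_iff_eq (hp : cycAdj (m + 1) p i) : cycAdj (m + 1) j i ↔ j = p := by
  refine ⟨fun hj => Fin.ext ?_, fun hj => hj ▸ hp⟩
  have hmod : j.val ≡ p.val [MOD m + 1] := Nat.ModEq.add_right_cancel' 1 (hj.trans hp.symm)
  exact hmod.eq_of_lt_of_lt j.isLt p.isLt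

/-- The subgraph of cross-edges of a partition-cycle. -/
def crossAdj {n : ℕ} (Ep : Finset (Fin n × Fin n)) : Fin n → Fin n → Prop :=
  fun j i => (j, i) ∈ Ep

namespace IsPartitionCycle

lemma pcAdj_lt (h : IsPartitionCycle (m + 1) k Ep) (hji : pcAdj (m + 1) Ep j i) (hi : i ≠ 0) :
    j < i := by
  rcases hji with hcyc | hcross
  · obtain ⟨i, rfl⟩ := Fin.exists_succ_eq.2 hi
    rw [(cycAdj_iff_eq (cycAdj_castSucc_succ i)).1 hcyc]
    exact Fin.castSucc_lt_succ
  · obtain ⟨hj, hi⟩ := h.2.2.1 _ hcross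
    exact Fin.lt_def.2 (hj.trans_le hi)

lemma not_pcAdj_self (h : IsPartitionCycle (m + 1) k Ep) (i : Fin (m + 1)) :
    ¬ pcAdj (m + 1) Ep i i := by
  intro hii
  rcases eq_or_ne i 0 with rfl | hi
  · obtain ⟨hk, hkm, hcross, -⟩ := h
    rcases hii with hcyc | hmem
    · have := congrArg Fin.val ((cycAdj_iff_eq cycAdj_last_zero).1 hcyc)
      simp only [Fin.val_zero, Fin.val_last] at this
      omega
    · exact absurd (hcross _ hmem).1 (hcross _ hmem).2.not_gt
  · exact lt_irrefl i (h.pcAdj_lt hii hi)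

variable {M : Type} {s s' : Fin (m + 1) → M} {c : M}

lemma support_pcAdj (h : IsPartitionCycle (m + 1) k Ep) (hp : cycAdj (m + 1) p i) :
    support (pcAdj (m + 1) Ep) s i c =
      (if s p = c then 1 else 0) + support (crossAdj Ep) s i c := by
  rw [← support_eq_ite fun _ => cycAdj_iff_eq hp]
  exact support_or fun j hcyc hcross => h.2.2.2 _ hcross hcyc

lemma support_pcAdj_of_lt (h : IsPartitionCycle (m + 1) k Ep) (hp : cycAdj (m + 1) p i)
    (hi : i.val < k) : support (pcAdj (m + 1) Ep) s i c = if s p = c then 1 else 0 := by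
  have hcross : support (crossAdj Ep) s i c = 0 :=
    Finset.card_eq_zero.2 <| Finset.filter_eq_empty_iff.2 fun j _ hj =>
      hi.not_ge (h.2.2.1 _ hj.1).2
  rw [h.support_pcAdj hp, hcross, add_zero]

variable {y : M} (h : IsPartitionCycle (m + 1) k Ep)
  (hshift : ∀ j : Fin (m + 1), j.val < k → s' j = s j ∨ s' j = y)
include h hshift

lemma support_crossAdj_le_of_ne (hc : c ≠ y) :
    support (crossAdj Ep) s' i c ≤ support (crossAdj Ep) s i c :=
  support_mono fun j hj hjc => by
    rcases hshift j (h.2.2.1 _ hj).1 with hkeep | hmove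
    · rw [← hkeep, hjc]
    · exact absurd (hjc.symm.trans hmove) hc

lemma support_crossAdj_le_self :
    support (crossAdj Ep) s i y ≤ support (crossAdj Ep) s' i y :=
  support_mono fun j hj hjy => by
    rcases hshift j (h.2.2.1 _ hj).1 with hkeep | hmove
    · rw [hkeep, hjy]
    · exact hmove

end IsPartitionCycle

end PartitionCycle

section Sweep

variable {M : Type}

/-- Colour `c` is an admissible answer to `s` of player `i`, who currently plays `a`: it is a best
response, and if it differs from `a` then it is strictly better than `a` and has maximal support
along the cross-edges. The current colour is a separate argument so that `s` matters only at the
in-neighbours of `i`. -/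
structure IsReply {n : ℕ} (Ep : Finset (Fin n × Fin n)) (C : Fin n → Finset M) (s : Fin n → M)
    (i : Fin n) (a c : M) : Prop where
  mem : c ∈ C i
  support_le : ∀ b ∈ C i, support (pcAdj n Ep) s i b ≤ support (pcAdj n Ep) s i c
  support_lt : c ≠ a → support (pcAdj n Ep) s i a < support (pcAdj n Ep) s i c
  cross_le : c ≠ a → ∀ b ∈ C i, support (crossAdj Ep) s i b ≤ support (crossAdj Ep) s i c

/-- The profile in the middle of a sweep from `s` to `s'`, when exactly the players before `t`
have moved. -/
def midSweep {n : ℕ} (s s' : Fin n → M) (t : ℕ) : Fin n → M :=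
  fun j => if j.val < t then s' j else s j

/-- `s'` arises from `s` by letting the players `0, 1, …, n - 1` reply one after the other. -/
def IsSweep {n : ℕ} (Ep : Finset (Fin n × Fin n)) (C : Fin n → Finset M) (s s' : Fin n → M) :
    Prop :=
  ∀ i : Fin n, IsReply Ep C (midSweep s s' i) i (s i) (s' i)

section

variable {n : ℕ} {Ep : Finset (Fin n × Fin n)} {C : Fin n → Finset M} {s s' : Fin n → M}

lemma midSweep_zero : midSweep s s' 0 = s :=
  funext fun _ => if_neg (Nat.not_lt_zero _)

lemma midSweep_self (i : Fin n) : midSweep s s' i i = s i :=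
  if_neg (lt_irrefl _)

lemma midSweep_length : midSweep s s' n = s' :=
  funext fun j => if_pos j.isLt

lemma midSweep_succ (i : Fin n) :
    midSweep s s' (i + 1) = Function.update (midSweep s s' i) i (s' i) := by
  funext j
  rcases eq_or_ne j i with rfl | hj
  · simp only [midSweep, Nat.lt_succ_self, if_true, Function.update_self]
  · have hiff : j.val < i + 1 ↔ j.val < i := by
      have := Fin.val_ne_of_ne hj
      omega
    simp only [midSweep, hiff, Function.update_of_ne hj]

lemma Valid.midSweep (hs : Valid C s) (hs' : Valid C s') (t : ℕ) : Valid C (midSweep s s' t) :=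
  fun j => by
    unfold CG.midSweep
    split_ifs
    exacts [hs' j, hs j]

lemma IsReply.congr {t : Fin n → M} {i : Fin n} {a c : M} (h : IsReply Ep C s i a c)
    (hst : ∀ j, pcAdj n Ep j i → s j = t j) : IsReply Ep C t i a c := by
  have hpc : support (pcAdj n Ep) s i = support (pcAdj n Ep) t i := support_congr hst
  have hcross : support (crossAdj Ep) s i = support (crossAdj Ep) t i :=
    support_congr fun j hj => hst j (Or.inr hj)
  obtain ⟨hmem, hle, hlt, hcle⟩ := h
  rw [hpc] at hle hlt
  rw [hcross] at hcle
  exact ⟨hmem, hle, hlt, hcle⟩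

lemma IsSweep.valid (h : IsSweep Ep C s s') : Valid C s' :=
  fun i => (h i).mem

end

variable {m k : ℕ} {Ep : Finset (Fin (m + 1) × Fin (m + 1))} {C : Fin (m + 1) → Finset M}
  {s s' : Fin (m + 1) → M} {i p : Fin (m + 1)} {a c : M}

/-- Support and cross-support of a colour differ by at most one, so a colour maximizing their sum
maximizes both. -/
lemma IsPartitionCycle.exists_isReply (h : IsPartitionCycle (m + 1) k Ep)
    (hp : cycAdj (m + 1) p i) (ha : a ∈ C i) (s : Fin (m + 1) → M) :
    ∃ c, IsReply Ep C s i a c := by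
  by_cases hstay : ∀ b ∈ C i, support (pcAdj (m + 1) Ep) s i b ≤ support (pcAdj (m + 1) Ep) s i a
  · exact ⟨a, ha, hstay, fun hne => absurd rfl hne, fun hne => absurd rfl hne⟩
  · push Not at hstay
    obtain ⟨b, hb, hab⟩ := hstay
    obtain ⟨c, hc, hmax⟩ := Finset.exists_max_image (C i)
      (fun c => support (pcAdj (m + 1) Ep) s i c + support (crossAdj Ep) s i c) ⟨a, ha⟩
    have hboth : ∀ d ∈ C i, support (pcAdj (m + 1) Ep) s i d ≤ support (pcAdj (m + 1) Ep) s i c ∧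
        support (crossAdj Ep) s i d ≤ support (crossAdj Ep) s i c := by
      intro d hd
      have := hmax d hd
      simp only [h.support_pcAdj hp] at this ⊢
      split_ifs at this ⊢ <;> omega
    exact ⟨c, hc, fun d hd => (hboth d hd).1, fun _ => hab.trans_le (hboth b hb).1,
      fun _ d hd => (hboth d hd).2⟩

lemma IsPartitionCycle.exists_isSweep (h : IsPartitionCycle (m + 1) k Ep) (hs : Valid C s) :
    ∃ s', IsSweep Ep C s s' := by
  have hreply (i : Fin (m + 1)) (t : Fin (m + 1) → M) : ∃ c, IsReply Ep C t i (s i) c :=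
    let ⟨_, hp⟩ := exists_cycAdj i
    h.exists_isReply hp (hs i) t
  choose reply hreply using hreply
  let step (i : Fin (m + 1)) (prev : ∀ j < i, M) : M :=
    reply i fun j => if hj : j < i then prev j hj else s j
  refine ⟨wellFounded_lt.fix step, fun i => ?_⟩
  rw [wellFounded_lt.fix_eq step i]
  exact hreply i _

lemma IsReply.stabilizesWithin {L : ℕ} (hreply : IsReply Ep C s i (s i) c)
    (h : IsPartitionCycle (m + 1) k Ep) (hs : Valid C s)
    (hL : StabilizesWithin (pcAdj (m + 1) Ep) (fun _ _ => 1) (fun _ _ => 0) C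
      (Function.update s i c) L) :
    StabilizesWithin (pcAdj (m + 1) Ep) (fun _ _ => 1) (fun _ _ => 0) C s (L + 1) := by
  by_cases hkeep : c = s i
  · rw [hkeep, Function.update_eq_self] at hL
    exact hL.mono L.le_succ
  · exact hL.of_uniDev <|
      uniDev_update (h.not_pcAdj_self i) hs hreply.mem (hreply.support_lt hkeep)

namespace IsSweep

variable (h : IsPartitionCycle (m + 1) k Ep) (hsweep : IsSweep Ep C s s')
include hsweep

lemma isReply_zero : IsReply Ep C s 0 (s 0) (s' 0) := by
  simpa only [Fin.val_zero, midSweep_zero] using hsweep 0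

include h

lemma isReply_of_ne_zero (hi : i ≠ 0) : IsReply Ep C s' i (s i) (s' i) :=
  (hsweep i).congr fun _ hj => if_pos (h.pcAdj_lt hj hi)

lemma stabilizesWithin {L : ℕ} (hs : Valid C s)
    (hL : StabilizesWithin (pcAdj (m + 1) Ep) (fun _ _ => 1) (fun _ _ => 0) C s' L) :
    StabilizesWithin (pcAdj (m + 1) Ep) (fun _ _ => 1) (fun _ _ => 0) C s (L + (m + 1)) := by
  suffices hback : ∀ t l, t ≤ m + 1 →
      StabilizesWithin (pcAdj (m + 1) Ep) (fun _ _ => 1) (fun _ _ => 0) C (midSweep s s' t) l →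
      StabilizesWithin (pcAdj (m + 1) Ep) (fun _ _ => 1) (fun _ _ => 0) C s (l + t) from
    hback (m + 1) L le_rfl (by rwa [midSweep_length])
  intro t
  induction t with
  | zero => exact fun l _ hl => by rwa [midSweep_zero] at hl
  | succ t ih =>
    intro l ht hl
    let i : Fin (m + 1) := ⟨t, ht⟩
    rw [midSweep_succ i] at hl
    rw [add_comm t, ← add_assoc]
    refine ih (l + 1) (Nat.le_of_succ_le ht) ?_
    have hreply := hsweep i
    rw [← midSweep_self (s := s) (s' := s') i] at hreply
    exact hreply.stabilizesWithin h (hs.midSweep hsweep.valid t) hl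

lemma isNash (hlast : s' (Fin.last m) = s (Fin.last m)) :
    IsNash (pcAdj (m + 1) Ep) (fun _ _ => 1) (fun _ _ => 0) C s' := by
  refine isNash_of_support_le h.not_pcAdj_self hsweep.valid fun i => ?_
  rcases eq_or_ne i 0 with rfl | hi
  · have hsupp : support (pcAdj (m + 1) Ep) s 0 = support (pcAdj (m + 1) Ep) s' 0 := by
      funext c
      rw [h.support_pcAdj_of_lt cycAdj_last_zero h.1,
        h.support_pcAdj_of_lt cycAdj_last_zero h.1, hlast]
    rw [← hsupp]
    exact hsweep.isReply_zero.support_le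
  · exact (hsweep.isReply_of_ne_zero h hi).support_le

end IsSweep

lemma IsPartitionCycle.stabilizesWithin_of_forall_isSweep {L : ℕ}
    (h : IsPartitionCycle (m + 1) k Ep) (hs : Valid C s)
    (hL : ∀ s', IsSweep Ep C s s' → s' (Fin.last m) ≠ s (Fin.last m) →
      StabilizesWithin (pcAdj (m + 1) Ep) (fun _ _ => 1) (fun _ _ => 0) C s' L) :
    StabilizesWithin (pcAdj (m + 1) Ep) (fun _ _ => 1) (fun _ _ => 0) C s (L + (m + 1)) := by
  obtain ⟨s', hsweep⟩ := h.exists_isSweep hs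
  refine hsweep.stabilizesWithin h hs ?_
  by_cases hlast : s' (Fin.last m) = s (Fin.last m)
  · exact (hsweep.isNash h hlast).stabilizesWithin
  · exact hL s' hsweep hlast

lemma IsReply.eq_or_eq_of_lt (hreply : IsReply Ep C s i a c) (h : IsPartitionCycle (m + 1) k Ep)
    (hp : cycAdj (m + 1) p i) (hi : i.val < k) : c = a ∨ c = s p := by
  by_contra! hne
  have hlt := hreply.support_lt hne.1
  rw [h.support_pcAdj_of_lt hp hi, h.support_pcAdj_of_lt hp hi, if_neg hne.2.symm] at hlt
  exact Nat.not_lt_zero _ hlt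

end Sweep

section Anchored

variable {M : Type} {m k : ℕ} {Ep : Finset (Fin (m + 1) × Fin (m + 1))}
  {C : Fin (m + 1) → Finset M} {s s' : Fin (m + 1) → M}

/-- The invariant between sweeps: every player except possibly `0` plays a best response, and the
players from `q` on share one colour, which has maximal cross-support at each of them. -/
structure Anchored (Ep : Finset (Fin (m + 1) × Fin (m + 1))) (C : Fin (m + 1) → Finset M)
    (s : Fin (m + 1) → M) (q : Fin (m + 1)) : Prop where
  valid : Valid C s
  support_le : ∀ i ≠ 0, ∀ c ∈ C i,
    support (pcAdj (m + 1) Ep) s i c ≤ support (pcAdj (m + 1) Ep) s i (s i)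
  eq_last : ∀ i, q ≤ i → s i = s (Fin.last m)
  cross_le : ∀ i, q ≤ i → ∀ c ∈ C i,
    support (crossAdj Ep) s i c ≤ support (crossAdj Ep) s i (s (Fin.last m))

lemma IsSweep.anchored (h : IsPartitionCycle (m + 1) k Ep) (hsweep : IsSweep Ep C s s')
    {q : Fin (m + 1)} (hq : q ≠ 0) (heq : ∀ i, q ≤ i → s' i = s' (Fin.last m))
    (hmove : ∀ i, q ≤ i → s' i ≠ s i) : Anchored Ep C s' q where
  valid := hsweep.valid
  support_le _ hi := (hsweep.isReply_of_ne_zero h hi).support_le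
  eq_last := heq
  cross_le i hi := by
    have hi0 : i ≠ 0 := Fin.pos_iff_ne_zero.1 ((Fin.pos_iff_ne_zero.2 hq).trans_le hi)
    rw [← heq i hi]
    exact (hsweep.isReply_of_ne_zero h hi0).cross_le (hmove i hi)

namespace Anchored

variable {q : Fin (m + 1)} (hanch : Anchored Ep C s q) (h : IsPartitionCycle (m + 1) k Ep)
  (hsweep : IsSweep Ep C s s')
include hanch h hsweep

lemma eq_or_eq_last_of_lt (i : Fin (m + 1)) (hi : i.val < k) :
    s' i = s i ∨ s' i = s (Fin.last m) := by
  induction i using Fin.induction with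
  | zero => exact hsweep.isReply_zero.eq_or_eq_of_lt h cycAdj_last_zero hi
  | succ i ih =>
    have hcyc := cycAdj_castSucc_succ i
    have hi0 := Fin.succ_ne_zero i
    rcases (hsweep.isReply_of_ne_zero h hi0).eq_or_eq_of_lt h hcyc hi with hkeep | hcopy
    · exact Or.inl hkeep
    rcases ih (Nat.lt_of_succ_lt hi) with hpred | hpred
    · have hle := hanch.support_le _ hi0 _ (hsweep.valid i.succ)
      rw [hcopy, hpred, h.support_pcAdj_of_lt hcyc hi, h.support_pcAdj_of_lt hcyc hi,
        if_pos rfl] at hle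
      have : s i.castSucc = s i.succ := by
        by_contra hne
        rw [if_neg hne] at hle
        exact Nat.not_succ_le_zero 0 hle
      exact Or.inl (hcopy.trans (hpred.trans this))
    · exact Or.inr (hcopy.trans hpred)

lemma cross_le_of_isSweep {i : Fin (m + 1)} {c : M} (hi : q ≤ i) (hc : c ∈ C i) :
    support (crossAdj Ep) s' i c ≤ support (crossAdj Ep) s' i (s (Fin.last m)) := by
  have hshift := hanch.eq_or_eq_last_of_lt h hsweep
  rcases eq_or_ne c (s (Fin.last m)) with rfl | hne
  · exact le_rfl
  · calc support (crossAdj Ep) s' i c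
        ≤ support (crossAdj Ep) s i c := h.support_crossAdj_le_of_ne hshift hne
      _ ≤ support (crossAdj Ep) s i (s (Fin.last m)) := hanch.cross_le i hi c hc
      _ ≤ support (crossAdj Ep) s' i (s (Fin.last m)) := h.support_crossAdj_le_self hshift

lemma castSucc_eq_succ_of_ne {i : Fin m} (hi : q ≤ i.succ) (hne : s' i.succ ≠ s (Fin.last m)) :
    s' i.castSucc = s' i.succ := by
  have hreply := hsweep.isReply_of_ne_zero h (Fin.succ_ne_zero i)
  rw [hanch.eq_last _ hi] at hreply
  have hlt := hreply.support_lt hne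
  have hle := hanch.cross_le_of_isSweep h hsweep hi hreply.mem
  by_contra hpred
  rw [h.support_pcAdj (cycAdj_castSucc_succ i), h.support_pcAdj (cycAdj_castSucc_succ i),
    if_neg hpred] at hlt
  omega

variable (hlast : s' (Fin.last m) ≠ s (Fin.last m))
include hlast

lemma eq_last_of_isSweep (i : Fin (m + 1)) (hi : q ≤ i) : s' i = s' (Fin.last m) := by
  induction i using Fin.reverseInduction with
  | last => rfl
  | cast i ih =>
    have hsucc : q ≤ i.succ := hi.trans (Fin.castSucc_le_succ i)
    have heq := ih hsucc
    exact (hanch.castSucc_eq_succ_of_ne h hsweep hsucc (heq ▸ hlast)).trans heq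

lemma castSucc_eq_last_of_isSweep {p : Fin m} (hp : q ≤ p.succ) :
    s' p.castSucc = s' (Fin.last m) := by
  have heq := hanch.eq_last_of_isSweep h hsweep hlast p.succ hp
  exact (hanch.castSucc_eq_succ_of_ne h hsweep hp (heq ▸ hlast)).trans heq

/-- Had the player before the segment kept its colour, the first segment player would have preferred
that colour already before the sweep. -/
lemma castSucc_ne_of_isSweep {p : Fin m} (hp : q ≤ p.succ) : s' p.castSucc ≠ s p.castSucc := by
  intro hkeep
  have hcyc := cycAdj_castSucc_succ p
  have hp0 := Fin.succ_ne_zero p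
  have hpred := hanch.castSucc_eq_last_of_isSweep h hsweep hlast hp
  have hold := hanch.eq_last p.succ hp
  have hnew := hanch.eq_last_of_isSweep h hsweep hlast p.succ hp
  have hshift := hanch.eq_or_eq_last_of_lt h hsweep
  have hbefore := hanch.support_le _ hp0 _ (hsweep.valid p.succ)
  rw [hnew, hold, h.support_pcAdj hcyc, h.support_pcAdj hcyc, ← hkeep, hpred, if_pos rfl,
    if_neg hlast] at hbefore
  have hafter := (hsweep.isReply_of_ne_zero h hp0).support_lt (by rwa [hnew, hold])
  rw [hnew, hold, h.support_pcAdj hcyc, h.support_pcAdj hcyc, hpred, if_pos rfl,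
    if_neg hlast] at hafter
  have hle_new := h.support_crossAdj_le_of_ne (i := p.succ) hshift hlast
  have hle_old := h.support_crossAdj_le_self (i := p.succ) hshift
  omega

end Anchored

lemma Anchored.le_castSucc_of_isSweep {p : Fin m} (hanch : Anchored Ep C s p.succ)
    (h : IsPartitionCycle (m + 1) k Ep) (hsweep : IsSweep Ep C s s')
    (hlast : s' (Fin.last m) ≠ s (Fin.last m)) : k ≤ p.castSucc.val := by
  by_contra! hlt
  rcases hanch.eq_or_eq_last_of_lt h hsweep _ hlt with hkeep | hshift
  · exact hanch.castSucc_ne_of_isSweep h hsweep hlast le_rfl hkeep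
  · rw [hanch.castSucc_eq_last_of_isSweep h hsweep hlast le_rfl] at hshift
    exact hlast hshift

lemma Anchored.castSucc_of_isSweep {p : Fin m} (hanch : Anchored Ep C s p.succ)
    (h : IsPartitionCycle (m + 1) k Ep) (hsweep : IsSweep Ep C s s')
    (hlast : s' (Fin.last m) ≠ s (Fin.last m)) : Anchored Ep C s' p.castSucc := by
  have hp0 : p.castSucc ≠ 0 := Fin.pos_iff_ne_zero.1 <| Fin.lt_def.2 <|
    h.1.trans (hanch.le_castSucc_of_isSweep h hsweep hlast)
  have hcases (i : Fin (m + 1)) (hi : p.castSucc ≤ i) : i = p.castSucc ∨ p.succ ≤ i :=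
    hi.eq_or_lt.imp Eq.symm Fin.castSucc_lt_iff_succ_le.1
  refine hsweep.anchored h hp0 (fun i hi => ?_) (fun i hi => ?_)
  · rcases hcases i hi with rfl | hi
    · exact hanch.castSucc_eq_last_of_isSweep h hsweep hlast le_rfl
    · exact hanch.eq_last_of_isSweep h hsweep hlast i hi
  · rcases hcases i hi with rfl | hi
    · exact hanch.castSucc_ne_of_isSweep h hsweep hlast le_rfl
    · rwa [hanch.eq_last_of_isSweep h hsweep hlast i hi, hanch.eq_last i hi]

lemma Anchored.stabilizesWithin (h : IsPartitionCycle (m + 1) k Ep) (q : Fin (m + 1))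
    (hkq : k ≤ q.val) (s : Fin (m + 1) → M) (hanch : Anchored Ep C s q) :
    StabilizesWithin (pcAdj (m + 1) Ep) (fun _ _ => 1) (fun _ _ => 0) C s
      ((m + 1) * (q.val - k + 1)) := by
  induction q using Fin.induction generalizing s with
  | zero => exact absurd h.1 hkq.not_gt
  | succ p ih =>
    rw [mul_add_one]
    refine h.stabilizesWithin_of_forall_isSweep hanch.valid fun s' hsweep hlast => ?_
    have hkp : k ≤ p.val := hanch.le_castSucc_of_isSweep h hsweep hlast
    rw [Fin.val_succ, Nat.sub_add_comm hkp]
    exact ih hkp s' (hanch.castSucc_of_isSweep h hsweep hlast)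

end Anchored

theorem partition_cycle_improvement_path_general {n k : ℕ} {Ep : Finset (Fin n × Fin n)}
    (h : IsPartitionCycle n k Ep) {M : Type} {C : Fin n → Finset M} {s : Fin n → M}
    (hs : Valid C s) :
    ∃ L, L ≤ n * (n - k + 1) ∧ ImpPath (pcAdj n Ep) (fun _ _ => 1) (fun _ _ => 0) C s L := by
  have hkn := h.2.1
  obtain ⟨m, rfl⟩ := Nat.exists_eq_add_one.2 (Nat.zero_lt_of_lt hkn)
  have hkm : k ≤ m := Nat.le_of_lt_succ hkn
  rw [mul_add_one]
  refine h.stabilizesWithin_of_forall_isSweep hs fun s' hsweep hlast => ?_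
  have hm0 : Fin.last m ≠ 0 := Fin.pos_iff_ne_zero.1 (Fin.lt_def.2 (h.1.trans hkm))
  have hanch : Anchored Ep C s' (Fin.last m) := hsweep.anchored h hm0
    (fun i hi => by rw [Fin.last_le_iff.1 hi]) (fun i hi => by rwa [Fin.last_le_iff.1 hi])
  rw [Nat.sub_add_comm hkm]
  exact Anchored.stabilizesWithin h _ hkm s' hanch

/-- There is a constant `c` such that every coordination game without bonuses
on an unweighted partition-cycle on `n` nodes with top part of size `k`
admits, from every joint strategy, a finite improvement path of length at most
`c * n * (n - k)` ending in a Nash equilibrium. -/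
theorem partition_cycle_improvement_path :
    ∃ c : ℕ,
      ∀ (n k : ℕ) (Ep : Finset (Fin n × Fin n)),
        IsPartitionCycle n k Ep →
      ∀ (M : Type) [Fintype M],
      ∀ (C : Fin n → Finset M), (∀ i, (C i).Nonempty) →
      ∀ s : Fin n → M, Valid C s →
        ∃ L, L ≤ c * n * (n - k) ∧
          ImpPath (pcAdj n Ep) (fun _ _ => 1) (fun _ _ => 0) C s L := by
  refine ⟨2, fun n k Ep h M _ C _ s hs => ?_⟩
  obtain ⟨L, hL, hpath⟩ := partition_cycle_improvement_path_general h hs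
  have : 1 ≤ n - k := Nat.sub_pos_of_lt h.2.1
  exact ⟨L, by nlinarith, hpath⟩

end CG
end

section
/- Consider the coordination game on the simple cycle 1 → 2 → 3 → 1 in which every edge has weight 2, the colour sets are C(1) = {a, b}, C(2) = {a, c}, C(3) = {b, c} for three distinct colours a, b, c, and the bonuses are β(1,a) = β(2,c) = β(3,b) = 1 and β(i,c') = 0 for every other node–colour pair. This game has no Nash equilibrium: in each of the eight joint strategies some player's chosen colour is not a best response to the choices of the other players. -/
open scoped Classical

namespace CG

/-- Colour sets of Example 2: `C(1) = {a,b}`, `C(2) = {a,c}`, `C(3) = {b,c}`. -/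
def colEx {M : Type} [DecidableEq M] (a b c : M) : Fin 3 → Finset M := fun i =>
  if i = 0 then {a, b} else if i = 1 then {a, c} else {b, c}

/-- Bonuses of Example 2: `β(1,a) = β(2,c) = β(3,b) = 1`, otherwise `0`. -/
def bonusEx {M : Type} [DecidableEq M] (a b c : M) : Fin 3 → M → ℕ := fun i x =>
  if (i = 0 ∧ x = a) ∨ (i = 1 ∧ x = c) ∨ (i = 2 ∧ x = b) then 1 else 0

/-!
Since every edge weight exceeds the bonus gap `1`, the best response of a player on the cycle is to
copy his predecessor when the latter plays the colour without bonus, and to take his bonus colour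
otherwise. Writing `x` for "player 1 plays `b`", in an equilibrium `x` holds iff player 3 plays `b`,
iff player 2 does not play `c`, iff player 1 plays `a`, iff `x` fails.
-/

/-- Player `i` has no strictly better reply, among the colours in `C i`, to the colours the other
players choose in `s`. The colour `s i` itself is not required to lie in `C i`: this is `Valid`. -/
def IsBestResponse {V M : Type} [Fintype V] [DecidableEq V] (adj : V → V → Prop)
    (w : V → V → ℝ) (β : V → M → ℕ) (C : V → Finset M) (s : V → M) (i : V) : Prop :=
  ∀ d ∈ C i, payoff adj w β (Function.update s i d) i ≤ payoff adj w β s i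

section UniquePredecessor

variable {V M : Type} [Fintype V] {adj : V → V → Prop} {w : V → V → ℝ} {β : V → M → ℕ}
  {s : V → M} {i j : V}

theorem payoff_of_unique_pred (hpred : ∀ k, adj k j ↔ k = i) :
    payoff adj w β s j = (if s i = s j then w i j else 0) + β j (s j) := by
  simp only [payoff, hpred, Finset.sum_filter, ite_and, Finset.sum_ite_eq',
    Finset.mem_univ, if_true]

variable [DecidableEq V]

theorem payoff_update_of_unique_pred (hpred : ∀ k, adj k j ↔ k = i) (hij : i ≠ j) (d : M) :
    payoff adj w β (Function.update s j d) j = (if s i = d then w i j else 0) + β j d := by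
  rw [payoff_of_unique_pred hpred, Function.update_self, Function.update_of_ne hij]

theorem IsBestResponse.eq_iff_pred_eq {C : V → Finset M} {p q : M}
    (hbr : IsBestResponse adj w β C s j) (hpred : ∀ k, adj k j ↔ k = i)
    (hp : p ∈ C j) (hq : q ∈ C j) (hsj : s j = p ∨ s j = q)
    (hbonus : β j q < β j p) (hweight : (β j p : ℝ) < w i j + β j q) :
    s j = q ↔ s i = q := by
  have hgap : (β j q : ℝ) < β j p := mod_cast hbonus
  by_cases hs : s i = s j
  · rw [hs]
  have hij : i ≠ j := fun h => hs (congrArg s h)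
  have hdev (d : M) (hd : d ∈ C j) : (if s i = d then w i j else 0) + (β j d : ℝ) ≤ β j (s j) := by
    simpa only [payoff_update_of_unique_pred hpred hij, payoff_of_unique_pred hpred, if_neg hs,
      zero_add] using hbr d hd
  constructor
  · intro hjq
    have hp_dev := hdev p hp
    rw [hjq] at hp_dev
    split_ifs at hp_dev <;> linarith
  · intro hiq
    refine hsj.resolve_left fun hjp => ?_
    have hq_dev := hdev q hq
    rw [if_pos hiq, hjp] at hq_dev
    linarith

end UniquePredecessor

theorem cycAdj_iff_eq_s17 {n : ℕ} {i j : Fin n} (hij : cycAdj n i j) (k : Fin n) :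
    cycAdj n k j ↔ k = i := by
  refine ⟨fun hkj => ?_, fun h => h ▸ hij⟩
  have hmod : k.val ≡ i.val [MOD n] := Nat.ModEq.add_right_cancel' 1 (hkj.trans hij.symm)
  exact Fin.ext (hmod.eq_of_lt_of_lt k.isLt i.isLt)

theorem eq_iff_ne_of_mem_pair {M : Type*} [DecidableEq M] {x p q : M} (hpq : p ≠ q)
    (hx : x ∈ ({p, q} : Finset M)) : x = p ↔ x ≠ q := by
  grind

theorem three_cycle_weights_bonuses_no_nash_general
    {M : Type} [DecidableEq M] {a b c : M} (hab : a ≠ b) (hbc : b ≠ c) (hac : a ≠ c)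
    {w : Fin 3 → Fin 3 → ℝ} (hw : ∀ i j, cycAdj 3 i j → 1 < w i j)
    {s : Fin 3 → M} (hs : Valid (colEx a b c) s) :
    ∃ i : Fin 3, ∃ d ∈ colEx a b c i,
      payoff (cycAdj 3) w (bonusEx a b c) s i <
        payoff (cycAdj 3) w (bonusEx a b c) (Function.update s i d) i := by
  by_contra! hbr
  replace hbr : ∀ i, IsBestResponse (cycAdj 3) w (bonusEx a b c) (colEx a b c) s i := hbr
  have copies {i j : Fin 3} {p q : M} (hij : cycAdj 3 i j) (hC : colEx a b c j = {p, q})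
      (hp : bonusEx a b c j p = 1) (hq : bonusEx a b c j q = 0) : s j = q ↔ s i = q :=
    (hbr j).eq_iff_pred_eq (p := p) (cycAdj_iff_eq_s17 hij) (by simp [hC]) (by simp [hC])
      (by simpa [hC] using hs j) (by simp [hp, hq]) (by simpa [hp, hq] using hw i j hij)
  have player_one : s 0 = b ↔ s 2 = b :=
    copies (p := a) rfl rfl (by simp [bonusEx]) (by simp [bonusEx, hab.symm])
  have player_two : s 1 = a ↔ s 0 = a :=
    copies (p := c) rfl (Finset.pair_comm a c) (by simp [bonusEx]) (by simp [bonusEx, hac])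
  have player_three : s 2 = c ↔ s 1 = c :=
    copies (p := b) rfl rfl (by simp [bonusEx]) (by simp [bonusEx, hbc.symm])
  exact iff_not_self <| calc
    s 0 = b ↔ s 2 = b := player_one
    _ ↔ s 2 ≠ c := eq_iff_ne_of_mem_pair hbc (hs 2)
    _ ↔ s 1 ≠ c := player_three.not
    _ ↔ s 1 = a := (eq_iff_ne_of_mem_pair hac (hs 1)).symm
    _ ↔ s 0 = a := player_two
    _ ↔ s 0 ≠ b := eq_iff_ne_of_mem_pair hab (hs 0)

/-- The coordination game on the simple cycle `1 → 2 → 3 → 1` with all edge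
weights `2`, colour sets `C(1) = {a,b}`, `C(2) = {a,c}`, `C(3) = {b,c}` for
distinct colours `a, b, c`, and bonuses `β(1,a) = β(2,c) = β(3,b) = 1` (and
`0` otherwise) has no Nash equilibrium: in every joint strategy some player
can strictly improve by switching to another of his colours. -/
theorem three_cycle_weights_bonuses_no_nash
    {M : Type} [Fintype M] [DecidableEq M] (a b c : M)
    (hab : a ≠ b) (hbc : b ≠ c) (hac : a ≠ c) :
    ∀ s : Fin 3 → M, Valid (colEx a b c) s →
      ∃ i : Fin 3, ∃ d ∈ colEx a b c i,
        payoff (cycAdj 3) (fun _ _ => 2) (bonusEx a b c) s i <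
          payoff (cycAdj 3) (fun _ _ => 2) (bonusEx a b c)
            (Function.update s i d) i :=
  fun _ => three_cycle_weights_bonuses_no_nash_general hab hbc hac fun _ _ _ => one_lt_two

end CG
end
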